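/- For every k ≥ 1 there exist idempotent cofinite ultrafilters p_j^(k) on FIN_j for every j ≥ 1 such that: (1) for all i, j ≥ 1 and every nondecreasing surjection f : {0,…,j} → {0,…,i}, f(p_j^(k)) = p_i^(k); (2) p_j^(k+1) = p_j^(k) for every j ≤ k; and (3) p_j^(k) + p_{j−1}^(k) = p_j^(k) for every j with 2 ≤ j ≤ k. -/

import Mathlib

/-!
A family of cofinite ultrafilters `p j` on `FIN j` is coherent if `f (p j) = p i` for all tetris
maps `f`. Coherent families form a nonempty compact right topological semigroup under
coordinatewise addition, so Ellis–Numakura provides an idempotent one. The absorption law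
`p (j + 1) + p j = p (j + 1)` is then forced one level at a time.

The key is the staircase `r j = p j + p (j - 1) + ⋯ + p 0` of an idempotent coherent `p`. It is
again coherent: a tetris map sends consecutive summands to equal or consecutive terms of `p`, and
repetitions disappear by idempotency. If `p` satisfies the absorption law below level `k`, then
`r j = p j` for `j ≤ k` and `r (k + 1) = p (k + 1) + p k`, which absorbs `p k` on the right. Hence
the coherent families that agree with `p` up to level `k` and absorb `p k` at level `k + 1` form a
nonempty compact semigroup, and any idempotent in it satisfies the law one level further. Since
lower levels are never changed, the construction has a limit, and this single family serves for
all `k`.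
-/


open Filter

/-- `FIN k`: finitely supported functions `ℕ → {0,…,k}` attaining the maximum value `k`. -/
def FIN (k : ℕ) : Set (ℕ → ℕ) :=
  {b | (∀ n, b n ≤ k) ∧ {n | b n ≠ 0}.Finite ∧ ∃ n, b n = k}

/-- `Supp b < Supp b'`. -/
def SuppLT (b b' : ℕ → ℕ) : Prop :=
  ∀ m, b m ≠ 0 → ∀ m', b' m' ≠ 0 → m < m'

/-- `f` is (the extension to `ℕ` of) a nondecreasing surjection `{0,…,j} → {0,…,i}`. -/
def IsTetrisFn (j i : ℕ) (f : ℕ → ℕ) : Prop :=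
  (∀ l l', l' ≤ l → l ≤ j → f l' ≤ f l) ∧ (∀ l, l ≤ j → f l ≤ i) ∧
    ∀ m, m ≤ i → ∃ l, l ≤ j ∧ f l = m

/-- An ultrafilter is cofinite if for every `n` the set of `b` with `b n = 0` belongs
to it. -/
def IsCofinite (U : Ultrafilter (ℕ → ℕ)) : Prop := ∀ n, {b : ℕ → ℕ | b n = 0} ∈ U

/-- `A ∈ U + V`. -/
def memSum (U V : Ultrafilter (ℕ → ℕ)) (A : Set (ℕ → ℕ)) : Prop :=
  ∀ᶠ b in (U : Filter (ℕ → ℕ)), ∀ᶠ b' in (V : Filter (ℕ → ℕ)),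
    SuppLT b b' ∧ b + b' ∈ A

/-- The generalized tetris operation `b ↦ f ∘ b`. -/
def tetrisMap (f : ℕ → ℕ) : (ℕ → ℕ) → ℕ → ℕ := fun b => f ∘ b

attribute [local instance] Ultrafilter.add Ultrafilter.addSemigroup

section Ultrafilter

lemma map_add_of_eventually {M N : Type*} [Add M] [Add N] {U V : Ultrafilter M} {g : M → N}
    (h : ∀ᶠ b in (U : Filter M), ∀ᶠ b' in (V : Filter M), g (b + b') = g b + g b') :
    (U + V).map g = U.map g + V.map g := by
  ext A
  change (∀ᶠ b in (U : Filter M), ∀ᶠ b' in (V : Filter M), g (b + b') ∈ A) ↔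
    ∀ᶠ b in (U : Filter M), ∀ᶠ b' in (V : Filter M), g b + g b' ∈ A
  exact eventually_congr <| h.mono fun b hb => eventually_congr <| hb.mono fun b' hb' => by
    rw [hb']

lemma continuous_ultrafilter_map {α β : Type*} (g : α → β) :
    Continuous (Ultrafilter.map g) := by
  refine continuous_generateFrom_iff.2 ?_
  rintro _ ⟨s, rfl⟩
  exact ultrafilter_isOpen_basic (g ⁻¹' s)

lemma exists_idempotent_pi_ultrafilter_mem {ι : Type*} {M : ι → Type*} [∀ i, AddSemigroup (M i)]
    {S : Set (∀ i, Ultrafilter (M i))} (hne : S.Nonempty) (hS : IsClosed S)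
    (hadd : ∀ x ∈ S, ∀ y ∈ S, x + y ∈ S) : ∃ p ∈ S, p + p = p := by
  have hcont (r : ∀ i, Ultrafilter (M i)) : Continuous (· + r) := continuous_pi fun i =>
    (Ultrafilter.continuous_add_left (r i)).comp
      (continuous_apply (A := fun i => Ultrafilter (M i)) i)
  exact exists_idempotent_in_compact_add_subsemigroup hcont S hne hS.isCompact hadd

end Ultrafilter

section Staircase

variable {M : Type*} [AddSemigroup M] {p : ℕ → M}

/-- The staircase `p j + p (j - 1) + ⋯ + p 0` over a sequence `p`. For an idempotent coherent
family of ultrafilters it is the coherent family from which the next level of absorption is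
obtained. -/
def staircase (p : ℕ → M) : ℕ → M
  | 0 => p 0
  | j + 1 => p (j + 1) + staircase p j

lemma add_staircase {j : ℕ} (h : p j + p j = p j) : p j + staircase p j = staircase p j := by
  cases j with
  | zero => exact h
  | succ j => rw [staircase, ← add_assoc, h]

lemma staircase_eq_of_absorb {k : ℕ} (h : ∀ j < k, p (j + 1) + p j = p (j + 1)) {j : ℕ}
    (hj : j ≤ k) : staircase p j = p j := by
  induction j with
  | zero => rfl
  | succ j ih => rw [staircase, ih (Nat.le_of_succ_le hj), h j hj]

end Staircase

lemma exists_limit_of_extension {α : Type*} {P : ℕ → (ℕ → α) → Prop} (hzero : ∃ p, P 0 p)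
    (hsucc : ∀ k p, P k p → ∃ r, P (k + 1) r ∧ ∀ j ≤ k, r j = p j) :
    ∃ q : ℕ → α, ∀ k, ∃ p, P k p ∧ ∀ j ≤ k, p j = q j := by
  obtain ⟨p₀, hp₀⟩ := hzero
  choose! extend hextend hagree using hsucc
  let p : ℕ → ℕ → α := Nat.rec p₀ extend
  have hp : ∀ k, P k (p k) := Nat.rec hp₀ fun k ih => hextend k (p k) ih
  have hstable : ∀ {j k}, j ≤ k → p k j = p j j := fun {j} k hjk => by
    induction k, hjk using Nat.le_induction with
    | base => rfl
    | succ k hjk ih => exact (hagree k (p k) (hp k) j hjk).trans ih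
  exact ⟨fun j => p j j, fun k => ⟨p k, hp k, fun j => hstable⟩⟩

namespace SuppLT

variable {b b' : ℕ → ℕ}

lemma eq_zero_or_eq_zero (h : SuppLT b b') (n : ℕ) : b n = 0 ∨ b' n = 0 := by
  by_contra! hn
  exact lt_irrefl n (h n hn.1 n hn.2)

lemma add_mem_FIN (h : SuppLT b b') {i j : ℕ} (hij : i ≤ j) (hb : b ∈ FIN j) (hb' : b' ∈ FIN i) :
    b + b' ∈ FIN j := by
  obtain ⟨hle, hfin, n, hn⟩ := hb
  obtain ⟨hle', hfin', -⟩ := hb'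
  refine ⟨fun m => ?_, (hfin.union hfin').subset (Function.support_add b b'), n, ?_⟩
  · rcases h.eq_zero_or_eq_zero m with h0 | h0
    · simpa [h0] using (hle' m).trans hij
    · simpa [h0] using hle m
  · have := hle' n
    rcases h.eq_zero_or_eq_zero n with h0 | h0 <;> simp only [Pi.add_apply] <;> omega

lemma tetrisMap_add (h : SuppLT b b') {f : ℕ → ℕ} (hf : f 0 = 0) :
    tetrisMap f (b + b') = tetrisMap f b + tetrisMap f b' := by
  funext n
  rcases h.eq_zero_or_eq_zero n with h0 | h0 <;> simp [tetrisMap, h0, hf]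

end SuppLT

lemma eventually_suppLT {b : ℕ → ℕ} (hb : b.support.Finite) {V : Ultrafilter (ℕ → ℕ)}
    (hV : IsCofinite V) : ∀ᶠ b' in (V : Filter (ℕ → ℕ)), SuppLT b b' := by
  obtain ⟨N, hN⟩ := hb.bddAbove
  have hzero : ∀ᶠ b' in (V : Filter (ℕ → ℕ)), ∀ n ∈ Set.Iic N, b' n = 0 :=
    (Set.finite_Iic N).eventually_all.2 fun n _ => hV n
  filter_upwards [hzero] with b' hb' m hm m' hm'
  by_contra! hle
  exact hm' (hb' m' (hle.trans (hN hm)))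

lemma memSum_iff_mem_add {U V : Ultrafilter (ℕ → ℕ)}
    (h : ∀ᶠ b in (U : Filter (ℕ → ℕ)), ∀ᶠ b' in (V : Filter (ℕ → ℕ)), SuppLT b b')
    (A : Set (ℕ → ℕ)) : memSum U V A ↔ A ∈ U + V :=
  eventually_congr <| h.mono fun _ hb => eventually_congr <| hb.mono fun _ hb' =>
    and_iff_right hb'

/-- The cofinite ultrafilters on `FIN j`, encoded as ultrafilters on `ℕ → ℕ` that contain
`FIN j`. -/
structure IsFINUltrafilter (j : ℕ) (U : Ultrafilter (ℕ → ℕ)) : Prop where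
  FIN_mem : FIN j ∈ U
  isCofinite : IsCofinite U

namespace IsFINUltrafilter

variable {i j : ℕ} {U V : Ultrafilter (ℕ → ℕ)}

lemma eventually_suppLT (hU : IsFINUltrafilter j U) (hV : IsCofinite V) :
    ∀ᶠ b in (U : Filter (ℕ → ℕ)), ∀ᶠ b' in (V : Filter (ℕ → ℕ)), SuppLT b b' := by
  filter_upwards [hU.FIN_mem] with b hb using _root_.eventually_suppLT hb.2.1 hV

lemma add (hU : IsFINUltrafilter j U) (hV : IsFINUltrafilter i V) (hij : i ≤ j) :
    IsFINUltrafilter j (U + V) where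
  FIN_mem := by
    change ∀ᶠ b in (U : Filter (ℕ → ℕ)), ∀ᶠ b' in (V : Filter (ℕ → ℕ)), b + b' ∈ FIN j
    filter_upwards [hU.FIN_mem, hU.eventually_suppLT hV.isCofinite] with b hb hlt
    filter_upwards [hV.FIN_mem, hlt] with b' hb' hlt using hlt.add_mem_FIN hij hb hb'
  isCofinite n := by
    change ∀ᶠ b in (U : Filter (ℕ → ℕ)), ∀ᶠ b' in (V : Filter (ℕ → ℕ)), b n + b' n = 0
    filter_upwards [hU.isCofinite n] with b hb
    filter_upwards [hV.isCofinite n] with b' hb' using Nat.add_eq_zero_iff.2 ⟨hb, hb'⟩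

lemma map_tetrisMap_add (hU : IsFINUltrafilter j U) (hV : IsCofinite V) {f : ℕ → ℕ}
    (hf : f 0 = 0) :
    (U + V).map (tetrisMap f) = U.map (tetrisMap f) + V.map (tetrisMap f) :=
  map_add_of_eventually <| (hU.eventually_suppLT hV).mono fun _ hb =>
    hb.mono fun _ hb' => hb'.tetrisMap_add hf

lemma memSum_iff_of_add_eq (hU : IsFINUltrafilter j U) (hV : IsCofinite V) (h : U + V = U)
    (A : Set (ℕ → ℕ)) : memSum U V A ↔ A ∈ U := by
  rw [memSum_iff_mem_add (hU.eventually_suppLT hV), h]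

end IsFINUltrafilter

lemma isClosed_isFINUltrafilter (j : ℕ) : IsClosed {U | IsFINUltrafilter j U} := by
  have heq : {U | IsFINUltrafilter j U} =
      {U | FIN j ∈ U} ∩ ⋂ n, {U | {b : ℕ → ℕ | b n = 0} ∈ U} :=
    Set.ext fun U => ⟨fun h => ⟨h.1, Set.mem_iInter.2 h.2⟩, fun h => ⟨h.1, Set.mem_iInter.1 h.2⟩⟩
  rw [heq]
  exact (ultrafilter_isClosed_basic _).inter
    (isClosed_iInter fun _ => ultrafilter_isClosed_basic _)

lemma single_mem_FIN (n j : ℕ) : Pi.single n j ∈ FIN j := by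
  refine ⟨fun m => ?_, (Set.finite_singleton n).subset Pi.support_single_subset, n, by simp⟩
  rcases eq_or_ne m n with rfl | h <;> simp [*]

lemma isFINUltrafilter_map_single (j : ℕ) :
    IsFINUltrafilter j ((hyperfilter ℕ).map fun n => Pi.single n j) where
  FIN_mem := Ultrafilter.mem_map.2 <| univ_mem' fun n => single_mem_FIN n j
  isCofinite m := by
    refine Ultrafilter.mem_map.2 ?_
    filter_upwards [(Set.finite_singleton m).compl_mem_hyperfilter] with n hn
    exact Pi.single_eq_of_ne' (M := fun _ => ℕ) hn j

lemma tetrisMap_single {f : ℕ → ℕ} (hf : f 0 = 0) (n j : ℕ) :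
    tetrisMap f (Pi.single n j) = Pi.single n (f j) :=
  funext fun m => Pi.apply_single (fun _ => f) (fun _ => hf) n j m

namespace IsTetrisFn

variable {i j l : ℕ} {f : ℕ → ℕ}

lemma map_zero (hf : IsTetrisFn j i f) : f 0 = 0 := by
  obtain ⟨l, hl, h⟩ := hf.2.2 0 i.zero_le
  exact Nat.le_zero.1 (h ▸ hf.1 l 0 l.zero_le hl)

lemma map_top (hf : IsTetrisFn j i f) : f j = i := by
  obtain ⟨l, hl, h⟩ := hf.2.2 i le_rfl
  exact (hf.2.1 j le_rfl).antisymm (h ▸ hf.1 j l hl le_rfl)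

lemma restrict (hf : IsTetrisFn j i f) (hl : l ≤ j) : IsTetrisFn l (f l) f := by
  obtain ⟨hmono, hle, hsurj⟩ := hf
  refine ⟨fun a b hba hal => hmono a b hba (hal.trans hl), fun a hal => hmono l a hal hl,
    fun m hm => ?_⟩
  obtain ⟨a, haj, rfl⟩ := hsurj m (hm.trans (hle l hl))
  rcases le_total a l with hal | hla
  · exact ⟨a, hal, rfl⟩
  · exact ⟨l, le_rfl, (hmono a l hla haj).antisymm hm⟩

lemma eq_or_eq_succ (hf : IsTetrisFn (j + 1) i f) : i = f j ∨ i = f j + 1 := by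
  have hle : f j ≤ i := hf.2.1 j j.le_succ
  refine hle.eq_or_lt.imp Eq.symm fun hlt => ?_
  obtain ⟨l, hl, hfl⟩ := hf.2.2 (f j + 1) hlt
  rcases hl.eq_or_lt with rfl | hlj
  · rw [← hf.map_top, hfl]
  · have : f l ≤ f j := hf.1 j l (Nat.le_of_lt_succ hlj) j.le_succ
    omega

end IsTetrisFn

/-- Coherent families: `p j` is a cofinite ultrafilter on `FIN j`, and all tetris maps carry the
members of the family to one another. The index `0`, where `FIN 0 = {0}`, is included so that
inductions start at the trivial level. -/
structure IsCoherent (p : ℕ → Ultrafilter (ℕ → ℕ)) : Prop where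
  isFINUltrafilter : ∀ j, IsFINUltrafilter j (p j)
  map_tetrisMap : ∀ {j i f}, IsTetrisFn j i f → (p j).map (tetrisMap f) = p i

lemma exists_isCoherent : ∃ p, IsCoherent p := by
  refine ⟨fun j => (hyperfilter ℕ).map fun n => Pi.single n j, isFINUltrafilter_map_single,
    fun {j i f} hf => ?_⟩
  rw [Ultrafilter.map_map]
  congr 1
  funext n
  rw [Function.comp_apply, tetrisMap_single hf.map_zero, hf.map_top]

lemma isClosed_isCoherent : IsClosed {p | IsCoherent p} := by
  have heq : {p | IsCoherent p} = {p | ∀ j, IsFINUltrafilter j (p j)} ∩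
      {p | ∀ j i f, IsTetrisFn j i f → (p j).map (tetrisMap f) = p i} :=
    Set.ext fun p => ⟨fun h => ⟨h.1, fun _ _ _ => h.2⟩, fun h => ⟨h.1, h.2 _ _ _⟩⟩
  have hcont (j : ℕ) : Continuous fun p : ℕ → Ultrafilter (ℕ → ℕ) => p j := continuous_apply j
  simp only [heq, Set.ofPred_forall]
  exact (isClosed_iInter fun j => (isClosed_isFINUltrafilter j).preimage (hcont j)).inter
    (isClosed_iInter fun j => isClosed_iInter fun i => isClosed_iInter fun f =>
      isClosed_iInter fun _ =>
        isClosed_eq ((continuous_ultrafilter_map _).comp (hcont j)) (hcont i))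

namespace IsCoherent

variable {p q : ℕ → Ultrafilter (ℕ → ℕ)}

lemma add (hp : IsCoherent p) (hq : IsCoherent q) : IsCoherent (p + q) where
  isFINUltrafilter j := (hp.isFINUltrafilter j).add (hq.isFINUltrafilter j) le_rfl
  map_tetrisMap {j i f} hf := by
    rw [Pi.add_apply, (hp.isFINUltrafilter j).map_tetrisMap_add (hq.isFINUltrafilter j).isCofinite
      hf.map_zero, hp.map_tetrisMap hf, hq.map_tetrisMap hf, Pi.add_apply]

lemma isFINUltrafilter_staircase (hp : IsCoherent p) (j : ℕ) :
    IsFINUltrafilter j (staircase p j) := by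
  induction j with
  | zero => exact hp.isFINUltrafilter 0
  | succ j ih => exact (hp.isFINUltrafilter (j + 1)).add ih j.le_succ

lemma staircase (hp : IsCoherent p) (hidem : p + p = p) : IsCoherent (staircase p) where
  isFINUltrafilter := hp.isFINUltrafilter_staircase
  map_tetrisMap {j i f} hf := by
    induction j generalizing i with
    | zero =>
      obtain rfl : i = 0 := hf.map_top.symm.trans hf.map_zero
      exact hp.map_tetrisMap hf
    | succ j ih =>
      rw [_root_.staircase, (hp.isFINUltrafilter _).map_tetrisMap_add
        (hp.isFINUltrafilter_staircase j).isCofinite hf.map_zero, hp.map_tetrisMap hf,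
        ih (hf.restrict j.le_succ)]
      rcases hf.eq_or_eq_succ with rfl | rfl
      · exact add_staircase (congrFun hidem _)
      · rfl

end IsCoherent

/-- Towers of height `k`: idempotent coherent families that satisfy the absorption law
`p (j + 1) + p j = p (j + 1)` below level `k`. The required family is a limit of these. -/
structure IsTower (k : ℕ) (p : ℕ → Ultrafilter (ℕ → ℕ)) : Prop where
  isCoherent : IsCoherent p
  add_self : p + p = p
  absorb : ∀ j < k, p (j + 1) + p j = p (j + 1)

/-- The coherent families that agree with `p` up to level `k` and absorb `p k` at level `k + 1`.
If `p` is a tower of height `k`, then the idempotents here are towers of height `k + 1`. -/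
def towerExtensions (k : ℕ) (p : ℕ → Ultrafilter (ℕ → ℕ)) : Set (ℕ → Ultrafilter (ℕ → ℕ)) :=
  {r | IsCoherent r ∧ (∀ j ≤ k, r j = p j) ∧ r (k + 1) + p k = r (k + 1)}

lemma isClosed_towerExtensions (k : ℕ) (p : ℕ → Ultrafilter (ℕ → ℕ)) :
    IsClosed (towerExtensions k p) := by
  have hagree : IsClosed {r : ℕ → Ultrafilter (ℕ → ℕ) | ∀ j ≤ k, r j = p j} := by
    simp only [Set.ofPred_forall]
    exact isClosed_iInter fun j => isClosed_iInter fun _ =>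
      isClosed_eq (continuous_apply j) continuous_const
  have habsorb : IsClosed {r : ℕ → Ultrafilter (ℕ → ℕ) | r (k + 1) + p k = r (k + 1)} :=
    isClosed_eq ((Ultrafilter.continuous_add_left (p k)).comp (continuous_apply (k + 1)))
      (continuous_apply (k + 1))
  exact isClosed_isCoherent.inter (hagree.inter habsorb)

lemma exists_isTower_zero : ∃ p, IsTower 0 p := by
  obtain ⟨p, hp, hidem⟩ := exists_idempotent_pi_ultrafilter_mem exists_isCoherent
    isClosed_isCoherent fun _ hx _ hy => hx.add hy
  exact ⟨p, hp, hidem, fun _ hj => absurd hj (Nat.not_lt_zero _)⟩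

namespace IsTower

variable {k : ℕ} {p r s : ℕ → Ultrafilter (ℕ → ℕ)}

lemma add_mem_towerExtensions (hp : IsTower k p) (hr : r ∈ towerExtensions k p)
    (hs : s ∈ towerExtensions k p) : r + s ∈ towerExtensions k p := by
  refine ⟨hr.1.add hs.1, fun j hj => ?_, ?_⟩
  · rw [Pi.add_apply, hr.2.1 j hj, hs.2.1 j hj]
    exact congrFun hp.add_self j
  · rw [Pi.add_apply, add_assoc, hs.2.2]

lemma staircase_mem_towerExtensions (hp : IsTower k p) : staircase p ∈ towerExtensions k p := by
  refine ⟨hp.isCoherent.staircase hp.add_self, fun j => staircase_eq_of_absorb hp.absorb, ?_⟩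
  have hk : p k + p k = p k := congrFun hp.add_self k
  rw [staircase, staircase_eq_of_absorb hp.absorb le_rfl, add_assoc, hk]

lemma of_mem_towerExtensions (hp : IsTower k p) (hr : r ∈ towerExtensions k p)
    (hidem : r + r = r) : IsTower (k + 1) r := by
  obtain ⟨hcoh, hagree, habsorb⟩ := hr
  refine ⟨hcoh, hidem, fun j hj => ?_⟩
  rcases (Nat.le_of_lt_succ hj).eq_or_lt with rfl | hjk
  · rw [hagree j le_rfl, habsorb]
  · rw [hagree (j + 1) hjk, hagree j hjk.le, hp.absorb j hjk]

lemma exists_succ (hp : IsTower k p) : ∃ r, IsTower (k + 1) r ∧ ∀ j ≤ k, r j = p j := by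
  obtain ⟨r, hr, hidem⟩ := exists_idempotent_pi_ultrafilter_mem
    ⟨_, hp.staircase_mem_towerExtensions⟩ (isClosed_towerExtensions k p)
    fun _ hx _ hy => hp.add_mem_towerExtensions hx hy
  exact ⟨r, hp.of_mem_towerExtensions hr hidem, hr.2.1⟩

end IsTower

lemma exists_forall_isTower : ∃ q, ∀ k, IsTower k q := by
  obtain ⟨q, hq⟩ := exists_limit_of_extension exists_isTower_zero fun _ _ => IsTower.exists_succ
  refine ⟨q, fun k => ⟨⟨fun j => ?_, fun {j i f} hf => ?_⟩, funext fun j => ?_, fun j _ => ?_⟩⟩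
  · obtain ⟨p, hp, hpq⟩ := hq j
    exact hpq j le_rfl ▸ hp.isCoherent.isFINUltrafilter j
  · obtain ⟨p, hp, hpq⟩ := hq (max j i)
    rw [← hpq j (le_max_left j i), ← hpq i (le_max_right j i)]
    exact hp.isCoherent.map_tetrisMap hf
  · obtain ⟨p, hp, hpq⟩ := hq j
    rw [Pi.add_apply, ← hpq j le_rfl]
    exact congrFun hp.add_self j
  · obtain ⟨p, hp, hpq⟩ := hq (j + 1)
    rw [← hpq (j + 1) le_rfl, ← hpq j j.le_succ]
    exact hp.absorb j j.lt_succ_self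

theorem exists_idempotent_family_general :
    ∃ q : ℕ → Ultrafilter (ℕ → ℕ),
      (∀ j, (FIN j ∈ q j ∧ IsCofinite (q j)) ∧
        ∀ A : Set (ℕ → ℕ), memSum (q j) (q j) A ↔ A ∈ q j) ∧
      (∀ i j, ∀ f : ℕ → ℕ, IsTetrisFn j i f → (q j).map (tetrisMap f) = q i) ∧
      (∀ j, ∀ A : Set (ℕ → ℕ), memSum (q (j + 1)) (q j) A ↔ A ∈ q (j + 1)) := by
  obtain ⟨q, hq⟩ := exists_forall_isTower
  have hcoh : IsCoherent q := (hq 0).isCoherent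
  have hfin (j : ℕ) : IsFINUltrafilter j (q j) := hcoh.isFINUltrafilter j
  have hidem (j : ℕ) : q j + q j = q j := congrFun (hq 0).add_self j
  have habsorb (j : ℕ) : q (j + 1) + q j = q (j + 1) := (hq (j + 1)).absorb j j.lt_succ_self
  exact ⟨q, fun j => ⟨⟨(hfin j).FIN_mem, (hfin j).isCofinite⟩,
      (hfin j).memSum_iff_of_add_eq (hfin j).isCofinite (hidem j)⟩,
    fun _ _ _ => hcoh.map_tetrisMap,
    fun j => (hfin (j + 1)).memSum_iff_of_add_eq (hfin j).isCofinite (habsorb j)⟩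

/-- There exists a family `p k j` (for `k, j ≥ 1`) of idempotent cofinite ultrafilters
on `FIN j` such that: (1) for `i, j ≥ 1` and any nondecreasing surjection
`f : {0,…,j} → {0,…,i}` one has `f(p_j^(k)) = p_i^(k)`; (2) `p_j^(k+1) = p_j^(k)` for
`j ≤ k`; (3) `p_j^(k) + p_{j-1}^(k) = p_j^(k)` for `2 ≤ j ≤ k`. -/
theorem exists_idempotent_family :
    ∃ p : ℕ → ℕ → Ultrafilter (ℕ → ℕ),
      (∀ k j, 1 ≤ k → 1 ≤ j →
        (FIN j ∈ p k j ∧ IsCofinite (p k j)) ∧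
        (∀ A : Set (ℕ → ℕ), memSum (p k j) (p k j) A ↔ A ∈ p k j)) ∧
      (∀ k, 1 ≤ k → ∀ i j, 1 ≤ i → 1 ≤ j →
        ∀ f : ℕ → ℕ, IsTetrisFn j i f → (p k j).map (tetrisMap f) = p k i) ∧
      (∀ k j, 1 ≤ k → 1 ≤ j → j ≤ k → p (k + 1) j = p k j) ∧
      (∀ k j, 2 ≤ j → j ≤ k →
        ∀ A : Set (ℕ → ℕ), memSum (p k j) (p k (j - 1)) A ↔ A ∈ p k j) := by
  obtain ⟨q, hq, hmap, habsorb⟩ := exists_idempotent_family_general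
  exact ⟨fun _ => q, fun _ j _ _ => hq j, fun _ _ i j _ _ => hmap i j, fun _ _ _ _ _ => rfl,
    fun | _, j + 1, _, _ => habsorb j⟩
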